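/- arXiv:1808.10312 — 2 statements merged into one kernel-verified Lean document; each statement's English description precedes it below -/
import Mathlib

section
/- Soundness and completeness of the Logic of Approximate Entailment on a Chain: for any theory T and any formula Φ of LAEC, T proves Φ in the proof system of LAEC if and only if T semantically entails Φ, i.e. every evaluation in every totally ordered similarity space that satisfies all members of T also satisfies Φ. -/
/-- A finite t-norm: a finite subset `V` of the real unit interval containing `0` and `1`,
equipped with an associative, commutative, monotone operation with neutral element `1`. -/
structure FiniteTNorm where
  V : Set ℝ
  finite : V.Finite
  subset : V ⊆ Set.Icc (0 : ℝ) 1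
  zero_mem : (0 : ℝ) ∈ V
  one_mem : (1 : ℝ) ∈ V
  op : V → V → V
  op_assoc : ∀ a b c, op (op a b) c = op a (op b c)
  op_comm : ∀ a b, op a b = op b a
  op_one : ∀ a, op a ⟨1, one_mem⟩ = a
  op_mono : ∀ a b c d : V, (a : ℝ) ≤ (b : ℝ) → (c : ℝ) ≤ (d : ℝ) → (op a c : ℝ) ≤ (op b d : ℝ)

def FiniteTNorm.one (T : FiniteTNorm) : T.V := ⟨1, T.one_mem⟩

def FiniteTNorm.zero (T : FiniteTNorm) : T.V := ⟨0, T.zero_mem⟩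

/-- A finite similarity space based on the finite t-norm `T`. -/
structure SimilaritySpace (T : FiniteTNorm) (W : Type) [Fintype W] [Nonempty W] where
  S : W → W → T.V
  eq_one_iff : ∀ u v, S u v = T.one ↔ u = v
  symm : ∀ u v, S u v = S v u
  triangle : ∀ u v w, (T.op (S u v) (S v w) : ℝ) ≤ (S u w : ℝ)

/-- The `c`-neighbourhood `U_c(A)` of a set `A` of worlds. -/
def SimilaritySpace.nbhd {T : FiniteTNorm} {W : Type} [Fintype W] [Nonempty W]
    (sp : SimilaritySpace T W) (c : T.V) (A : Set W) : Set W :=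
  {w | ∃ a ∈ A, (c : ℝ) ≤ (sp.S w a : ℝ)}

/-- A totally ordered similarity space: a finite similarity space together with a total
order compatible with the similarity. -/
structure TOSimilaritySpace (T : FiniteTNorm) (W : Type) [Fintype W] [Nonempty W]
    [LinearOrder W] extends SimilaritySpace T W where
  compat : ∀ u v w : W, u ≤ v → v ≤ w → (S u w : ℝ) ≤ min (S u v : ℝ) (S v w : ℝ)

/-- The downward closure `◇≤ A`. -/
def dcl {W : Type} [LinearOrder W] (A : Set W) : Set W := {v | ∃ w ∈ A, v ≤ w}

/-- The upward closure `◇≥ A`. -/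
def ucl {W : Type} [LinearOrder W] (A : Set W) : Set W := {v | ∃ w ∈ A, w ≤ v}

/-! ## Syntax of the Logic of Approximate Entailment on a Chain `LAEC` -/

/-- Basic expressions of `LAEC` over `N` propositional variables: Boolean operations and
the two modal operators `◇≤` (`dle`) and `◇≥` (`dge`). -/
inductive BExpC (N : ℕ) : Type
  | var (i : Fin N)
  | bot
  | top
  | and (φ ψ : BExpC N)
  | or (φ ψ : BExpC N)
  | not (φ : BExpC N)
  | dle (φ : BExpC N)
  | dge (φ : BExpC N)

/-- Formulas of classical propositional logic over countably many variables. -/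
inductive PropForm : Type
  | var (n : ℕ)
  | bot
  | top
  | and (φ ψ : PropForm)
  | or (φ ψ : PropForm)
  | not (φ : PropForm)

/-- Boolean evaluation of a classical propositional formula. -/
def PropForm.beval (v : ℕ → Bool) : PropForm → Bool
  | .var n => v n
  | .bot => false
  | .top => true
  | .and φ ψ => φ.beval v && ψ.beval v
  | .or φ ψ => φ.beval v || ψ.beval v
  | .not φ => !φ.beval v

/-- Uniform replacement of the variables of a classical propositional formula by basic
expressions of `LAEC`. -/
def PropForm.substC {N : ℕ} (σ : ℕ → BExpC N) : PropForm → BExpC N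
  | .var n => σ n
  | .bot => .bot
  | .top => .top
  | .and φ ψ => .and (φ.substC σ) (ψ.substC σ)
  | .or φ ψ => .or (φ.substC σ) (ψ.substC σ)
  | .not φ => .not (φ.substC σ)

/-- The literal on variable `i`, positive or negated according to `b`. -/
def BExpC.literal {N : ℕ} (i : Fin N) (b : Bool) : BExpC N :=
  if b then BExpC.var i else BExpC.not (BExpC.var i)

/-- The conjunction of a list of basic expressions. -/
def conjListC {N : ℕ} : List (BExpC N) → BExpC N
  | [] => BExpC.top
  | [φ] => φ
  | φ :: χ :: rest => BExpC.and φ (conjListC (χ :: rest))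

/-- A maximally elementary conjunction (m.e.c.): a conjunction of literals in which each
variable occurs exactly once. -/
def IsMecC {N : ℕ} (φ : BExpC N) : Prop :=
  ∃ (l : List (Fin N)) (f : Fin N → Bool),
    l.Nodup ∧ (∀ i, i ∈ l) ∧ φ = conjListC (l.map fun i => BExpC.literal i (f i))

/-- A diamond expression: a basic expression of the form `◇≤φ` or `◇≥φ`. -/
def IsDiamond {N : ℕ} : BExpC N → Prop
  | .dle _ => True
  | .dge _ => True
  | _ => False

/-- A conjunction of diamond expressions. -/
def IsDiamondConj {N : ℕ} (ρ : BExpC N) : Prop :=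
  ∃ l : List (BExpC N), l ≠ [] ∧ (∀ χ ∈ l, IsDiamond χ) ∧ ρ = conjListC l

/-- Formulas: Boolean combinations of graded implications `φ ⤳_c ψ`. -/
inductive CFml (N : ℕ) (V : Type) : Type
  | gi (φ : BExpC N) (c : V) (ψ : BExpC N)
  | and (Φ Ψ : CFml N V)
  | or (Φ Ψ : CFml N V)
  | not (Φ : CFml N V)

/-- The (definable) outer-level implication `Φ → Ψ := ¬Φ ∨ Ψ`. -/
def CFml.imp {N : ℕ} {V : Type} (Φ Ψ : CFml N V) : CFml N V := CFml.or (CFml.not Φ) Ψ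

/-- Boolean evaluation of a formula given truth values for the graded implications
occurring in it; a formula is a substitution instance of a classical tautology by graded
implications iff it evaluates to `true` under every such assignment. -/
def CFml.peval {N : ℕ} {V : Type} (g : BExpC N → V → BExpC N → Bool) : CFml N V → Bool
  | .gi φ c ψ => g φ c ψ
  | .and Φ Ψ => Φ.peval g && Ψ.peval g
  | .or Φ Ψ => Φ.peval g || Ψ.peval g
  | .not Φ => !Φ.peval g

/-! ## The proof system of `LAEC` -/

/-- Provability in `LAEC` from a theory `Th`: axioms (A1'), (A2)–(A11), (A12)–(A19) and
modus ponens. -/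
inductive LAECProv {N : ℕ} (T : FiniteTNorm) (Th : Set (CFml N T.V)) : CFml N T.V → Prop
  | hyp {Φ} (h : Φ ∈ Th) : LAECProv T Th Φ
  | mp {Φ Ψ} (h₁ : LAECProv T Th Φ) (h₂ : LAECProv T Th (Φ.imp Ψ)) : LAECProv T Th Ψ
  | a1' {φ ψ : BExpC N}
      (h : ∃ (φ' ψ' : PropForm) (σ : ℕ → BExpC N),
        (∀ v, φ'.beval v = true → ψ'.beval v = true) ∧
          φ = φ'.substC σ ∧ ψ = ψ'.substC σ) :
      LAECProv T Th (.gi φ T.one ψ)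
  | a2 (φ ψ : BExpC N) :
      LAECProv T Th ((CFml.gi φ T.one ψ).imp (.gi (φ.and ψ.not) T.one .bot))
  | a3 (φ ψ : BExpC N) {c d : T.V} (h : (d : ℝ) ≤ (c : ℝ)) :
      LAECProv T Th ((CFml.gi φ c ψ).imp (.gi φ d ψ))
  | a4 (φ ψ : BExpC N) :
      LAECProv T Th ((CFml.not (.gi ψ T.one .bot)).imp (.gi φ T.zero ψ))
  | a5 (φ : BExpC N) (c : T.V) :
      LAECProv T Th ((CFml.gi φ c .bot).imp (.gi φ T.one .bot))
  | a6 {δ ε : BExpC N} (c : T.V) (hδ : IsMecC δ) (hε : IsMecC ε) :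
      LAECProv T Th
        ((CFml.and (.not (.gi δ T.one .bot)) (.gi δ c ε)).imp (.gi ε c δ))
  | a7 (φ ψ χ : BExpC N) (c : T.V) :
      LAECProv T Th ((CFml.and (.gi φ c χ) (.gi ψ c χ)).imp (.gi (φ.or ψ) c χ))
  | a8 {ε : BExpC N} (φ ψ : BExpC N) (c : T.V) (hε : IsMecC ε) :
      LAECProv T Th ((CFml.gi ε c (φ.or ψ)).imp (.or (.gi ε c φ) (.gi ε c ψ)))
  | a9 (φ ψ χ : BExpC N) (c d : T.V) :
      LAECProv T Th ((CFml.and (.gi φ c ψ) (.gi ψ d χ)).imp (.gi φ (T.op c d) χ))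
  | a10 : LAECProv T Th (CFml.not (.gi .top T.one .bot))
  | a11 {Φ : CFml N T.V} (h : ∀ g : BExpC N → T.V → BExpC N → Bool, Φ.peval g = true) :
      LAECProv T Th Φ
  | a12a (φ : BExpC N) : LAECProv T Th (.gi φ T.one φ.dle)
  | a12b (φ : BExpC N) : LAECProv T Th (.gi φ T.one φ.dge)
  | a13a (φ : BExpC N) : LAECProv T Th (.gi φ.dle.dle T.one φ.dle)
  | a13b (φ : BExpC N) : LAECProv T Th (.gi φ.dge.dge T.one φ.dge)
  | a14a : LAECProv T Th (.gi (BExpC.bot.dle) T.one .bot)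
  | a14b : LAECProv T Th (.gi (BExpC.bot.dge) T.one .bot)
  | a15a (φ ψ : BExpC N) :
      LAECProv T Th (.or (.gi φ.dle T.one ψ.dle) (.gi ψ.dle T.one φ.dle))
  | a15b (φ ψ : BExpC N) :
      LAECProv T Th (.or (.gi φ.dge T.one ψ.dge) (.gi ψ.dge T.one φ.dge))
  | a16 {ε : BExpC N} (hε : IsMecC ε) :
      LAECProv T Th (.gi (ε.dle.and ε.dge) T.one ε)
  | a17a (φ ψ : BExpC N) (c : T.V) :
      LAECProv T Th ((CFml.gi φ c ψ).imp (.gi φ.dle c ψ.dle))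
  | a17b (φ ψ : BExpC N) (c : T.V) :
      LAECProv T Th ((CFml.gi φ c ψ).imp (.gi φ.dge c ψ.dge))
  | a18a (φ ψ : BExpC N) :
      LAECProv T Th
        ((CFml.gi (φ.and ψ.dle) T.one .bot).imp (.gi (φ.dge.and ψ.dle) T.one .bot))
  | a18b (φ ψ : BExpC N) :
      LAECProv T Th
        ((CFml.gi (φ.and ψ.dge) T.one .bot).imp (.gi (φ.dle.and ψ.dge) T.one .bot))
  | a19 {ρ σ : BExpC N} (φ : BExpC N) (c : T.V)
      (hρ : IsDiamondConj ρ) (hσ : IsDiamondConj σ) :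
      LAECProv T Th
        ((CFml.and (.and (.not (.gi (ρ.and σ) T.one .bot)) (.gi φ c ρ)) (.gi φ c σ)).imp
          (.gi φ c (ρ.and σ)))

/-! ## Semantics of `LAEC` -/

/-- An evaluation of the basic expressions of `LAEC` in a totally ordered similarity
space: it commutes with the Boolean operations, interprets `◇≤` and `◇≥` by the downward
and upward closures, and separates any two distinct worlds by some variable. -/
structure LAECEval (N : ℕ) (W : Type) [Fintype W] [Nonempty W] [LinearOrder W] where
  e : BExpC N → Set W
  map_bot : e .bot = ∅
  map_top : e .top = Set.univ
  map_and : ∀ φ ψ, e (φ.and ψ) = e φ ∩ e ψ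
  map_or : ∀ φ ψ, e (φ.or ψ) = e φ ∪ e ψ
  map_not : ∀ φ, e φ.not = (e φ)ᶜ
  map_dle : ∀ φ, e φ.dle = dcl (e φ)
  map_dge : ∀ φ, e φ.dge = ucl (e φ)
  separating : ∀ v w : W, v ≠ w → ∃ i : Fin N, Xor' (v ∈ e (.var i)) (w ∈ e (.var i))

/-- Satisfaction of a formula of `LAEC` by an evaluation in a totally ordered similarity
space. -/
def LAECSat {T : FiniteTNorm} {N : ℕ} {W : Type} [Fintype W] [Nonempty W] [LinearOrder W]
    (sp : TOSimilaritySpace T W) (ev : LAECEval N W) : CFml N T.V → Prop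
  | .gi φ c ψ => ev.e φ ⊆ sp.toSimilaritySpace.nbhd c (ev.e ψ)
  | .and Φ Ψ => LAECSat sp ev Φ ∧ LAECSat sp ev Ψ
  | .or Φ Ψ => LAECSat sp ev Φ ∨ LAECSat sp ev Ψ
  | .not Φ => ¬ LAECSat sp ev Φ

/-- Semantic entailment in `LAEC`: every evaluation in every totally ordered similarity
space that satisfies all members of the theory also satisfies the formula. -/
def LAECEntails {N : ℕ} (T : FiniteTNorm) (Th : Set (CFml N T.V)) (Φ : CFml N T.V) :
    Prop :=
  ∀ (W : Type) [Fintype W] [Nonempty W] [LinearOrder W],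
    ∀ (sp : TOSimilaritySpace T W) (ev : LAECEval N W),
      (∀ Ψ ∈ Th, LAECSat sp ev Ψ) → LAECSat sp ev Φ

namespace LAECProof

/-! ### Propositional layer -/

def bev {N : ℕ} (a : BExpC N → Prop) : BExpC N → Prop
  | .var i => a (.var i)
  | .bot => False
  | .top => True
  | .and φ ψ => bev a φ ∧ bev a ψ
  | .or φ ψ => bev a φ ∨ bev a ψ
  | .not φ => ¬ bev a φ
  | .dle φ => a (.dle φ)
  | .dge φ => a (.dge φ)

def enc {N : ℕ} : BExpC N → ℕ
  | .var i => Nat.pair 0 i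
  | .bot => Nat.pair 1 0
  | .top => Nat.pair 2 0
  | .and φ ψ => Nat.pair 3 (Nat.pair (enc φ) (enc ψ))
  | .or φ ψ => Nat.pair 4 (Nat.pair (enc φ) (enc ψ))
  | .not φ => Nat.pair 5 (enc φ)
  | .dle φ => Nat.pair 6 (enc φ)
  | .dge φ => Nat.pair 7 (enc φ)

theorem enc_inj {N : ℕ} : Function.Injective (enc (N := N)) := by
  intro φ
  induction φ with
  | var i => intro ψ h; cases ψ <;> simp [enc, Nat.pair_eq_pair, Fin.ext_iff] at h ⊢; exact h
  | bot => intro ψ h; cases ψ <;> simp [enc, Nat.pair_eq_pair] at h ⊢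
  | top => intro ψ h; cases ψ <;> simp [enc, Nat.pair_eq_pair] at h ⊢
  | and φ ψ h1 h2 =>
    intro ψ h; cases ψ <;> simp [enc, Nat.pair_eq_pair] at h ⊢; exact ⟨h1 h.1, h2 h.2⟩
  | or φ ψ h1 h2 =>
    intro ψ h; cases ψ <;> simp [enc, Nat.pair_eq_pair] at h ⊢; exact ⟨h1 h.1, h2 h.2⟩
  | not φ h1 => intro ψ h; cases ψ <;> simp [enc, Nat.pair_eq_pair] at h ⊢; exact h1 h
  | dle φ h1 => intro ψ h; cases ψ <;> simp [enc, Nat.pair_eq_pair] at h ⊢; exact h1 h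
  | dge φ h1 => intro ψ h; cases ψ <;> simp [enc, Nat.pair_eq_pair] at h ⊢; exact h1 h

def tr {N : ℕ} : BExpC N → PropForm
  | .var i => .var (enc (BExpC.var i))
  | .bot => .bot
  | .top => .top
  | .and φ ψ => .and (tr φ) (tr ψ)
  | .or φ ψ => .or (tr φ) (tr ψ)
  | .not φ => .not (tr φ)
  | .dle φ => .var (enc φ.dle)
  | .dge φ => .var (enc φ.dge)

theorem tr_subst {N : ℕ} (σ : ℕ → BExpC N) (hσ : ∀ φ, σ (enc φ) = φ) (φ : BExpC N) :
    (tr φ).substC σ = φ := by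
  induction φ <;> simp_all [tr, PropForm.substC]

theorem tr_beval {N : ℕ} (v : ℕ → Bool) (φ : BExpC N) :
    (tr φ).beval v = true ↔ bev (fun x => v (enc x) = true) φ := by
  induction φ with
  | not φ ih => simp only [tr, PropForm.beval, bev, ← ih]; simp
  | _ => simp_all [tr, PropForm.beval, bev]

theorem prov_taut {N : ℕ} {T : FiniteTNorm} {Th : Set (CFml N T.V)} {φ ψ : BExpC N}
    (h : ∀ a, bev a φ → bev a ψ) : LAECProv T Th (.gi φ T.one ψ) := by
  have : Nonempty (BExpC N) := ⟨.bot⟩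
  have hl : ∀ φ : BExpC N, Function.invFun enc (enc φ) = φ :=
    Function.leftInverse_invFun enc_inj
  refine .a1' ⟨tr φ, tr ψ, Function.invFun enc, ?_, (tr_subst _ hl φ).symm, (tr_subst _ hl ψ).symm⟩
  intro v
  rw [tr_beval, tr_beval]
  exact h _

theorem bev_conj {N : ℕ} (a : BExpC N → Prop) (l : List (BExpC N)) :
    bev a (conjListC l) ↔ ∀ φ ∈ l, bev a φ := by
  induction l with
  | nil => simp [conjListC, bev]
  | cons φ l ih =>
    cases l with
    | nil => simp [conjListC]
    | cons χ r => simp only [conjListC, bev, ih]; simp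

def mec {N : ℕ} (f : Fin N → Bool) : BExpC N :=
  conjListC ((List.finRange N).map fun i => BExpC.literal i (f i))

theorem isMec_mec {N : ℕ} (f : Fin N → Bool) : IsMecC (mec f) :=
  ⟨List.finRange N, f, List.nodup_finRange N, List.mem_finRange, rfl⟩

theorem bev_literal {N : ℕ} (a : BExpC N → Prop) (i : Fin N) (b : Bool) :
    bev a (BExpC.literal i b) ↔ (a (.var i) ↔ b = true) := by
  cases b <;> simp [BExpC.literal, bev]

theorem bev_mec {N : ℕ} (a : BExpC N → Prop) (f : Fin N → Bool) :
    bev a (mec f) ↔ ∀ i, (a (.var i) ↔ f i = true) := by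
  simp [mec, bev_conj, bev_literal]

def disjL {N : ℕ} : List (BExpC N) → BExpC N
  | [] => .bot
  | φ :: l => .or φ (disjL l)

theorem bev_disjL {N : ℕ} (a : BExpC N → Prop) (l : List (BExpC N)) :
    bev a (disjL l) ↔ ∃ φ ∈ l, bev a φ := by
  induction l with
  | nil => simp [disjL, bev]
  | cons φ l ih => simp [disjL, bev, ih]

/-! ### Abstract truth of graded implications -/

structure Good (N : ℕ) (T : FiniteTNorm) (G : BExpC N → T.V → BExpC N → Prop) : Prop where
  taut : ∀ {φ ψ : BExpC N}, (∀ a, bev a φ → bev a ψ) → G φ T.one ψ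
  a2 : ∀ {φ ψ : BExpC N}, G φ T.one ψ → G (φ.and ψ.not) T.one .bot
  a3 : ∀ {φ ψ : BExpC N} {c d : T.V}, (d : ℝ) ≤ c → G φ c ψ → G φ d ψ
  a4 : ∀ φ {ψ}, ¬ G ψ T.one .bot → G φ T.zero ψ
  a5 : ∀ {φ c}, G φ c .bot → G φ T.one .bot
  a6 : ∀ {δ ε : BExpC N} {c : T.V}, IsMecC δ → IsMecC ε → ¬ G δ T.one .bot → G δ c ε → G ε c δ
  a7 : ∀ {φ ψ χ : BExpC N} {c : T.V}, G φ c χ → G ψ c χ → G (φ.or ψ) c χ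
  a8 : ∀ {ε φ ψ : BExpC N} {c : T.V}, IsMecC ε → G ε c (φ.or ψ) → G ε c φ ∨ G ε c ψ
  a9 : ∀ {φ ψ χ : BExpC N} {c d : T.V}, G φ c ψ → G ψ d χ → G φ (T.op c d) χ
  a10 : ¬ G .top T.one .bot
  a12a : ∀ φ : BExpC N, G φ T.one φ.dle
  a12b : ∀ φ : BExpC N, G φ T.one φ.dge
  a13a : ∀ φ : BExpC N, G φ.dle.dle T.one φ.dle
  a13b : ∀ φ : BExpC N, G φ.dge.dge T.one φ.dge
  a14a : G (BExpC.bot.dle) T.one .bot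
  a14b : G (BExpC.bot.dge) T.one .bot
  a15a : ∀ φ ψ : BExpC N, G φ.dle T.one ψ.dle ∨ G ψ.dle T.one φ.dle
  a16 : ∀ {ε : BExpC N}, IsMecC ε → G (ε.dle.and ε.dge) T.one ε
  a17a : ∀ {φ ψ : BExpC N} {c : T.V}, G φ c ψ → G φ.dle c ψ.dle
  a17b : ∀ {φ ψ : BExpC N} {c : T.V}, G φ c ψ → G φ.dge c ψ.dge
  a18a : ∀ {φ ψ : BExpC N}, G (φ.and ψ.dle) T.one .bot → G (φ.dge.and ψ.dle) T.one .bot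
  a18b : ∀ {φ ψ : BExpC N}, G (φ.and ψ.dge) T.one .bot → G (φ.dle.and ψ.dge) T.one .bot
  a19 : ∀ {ρ σ φ : BExpC N} {c : T.V}, IsDiamondConj ρ → IsDiamondConj σ → ¬ G (ρ.and σ) T.one .bot →
    G φ c ρ → G φ c σ → G φ c (ρ.and σ)

namespace Good
variable {N : ℕ} {T : FiniteTNorm} {G : BExpC N → T.V → BExpC N → Prop}

theorem tr1 (H : Good N T G) {φ ψ χ : BExpC N} {c : T.V} (h1 : G φ c ψ) (h2 : G ψ T.one χ) : G φ c χ := by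
  have := H.a9 h1 h2
  rwa [show T.op c T.one = c from T.op_one c] at this

theorem tr1' (H : Good N T G) {φ ψ χ : BExpC N} {c : T.V} (h1 : G φ T.one ψ) (h2 : G ψ c χ) : G φ c χ := by
  have := H.a9 h1 h2
  rwa [T.op_comm, show T.op c T.one = c from T.op_one c] at this

theorem le_one (H : Good N T G) (c : T.V) : (c : ℝ) ≤ (T.one : ℝ) := (T.subset c.2).2

theorem of_one (H : Good N T G) {φ ψ : BExpC N} {c : T.V} (h1 : G φ T.one ψ) : G φ c ψ := H.a3 (H.le_one c) h1

theorem absurdL (H : Good N T G) {φ ψ : BExpC N} {c : T.V} (h1 : G φ T.one .bot) : G φ c ψ :=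
  H.of_one (H.tr1 h1 (H.taut (by simp [bev])))

/-- Conjunction on the right at level one. -/
theorem andR (H : Good N T G) {φ ψ χ : BExpC N} (h1 : G φ T.one ψ) (h2 : G φ T.one χ) : G φ T.one (ψ.and χ) := by
  have e1 := H.a2 h1
  have e2 := H.a2 h2
  have e3 : G (((φ.and ψ.not).or (φ.and χ.not)).or (ψ.and χ)) T.one (ψ.and χ) :=
    H.a7 (H.absurdL (H.a7 e1 e2)) (H.taut fun _ h => h)
  refine H.tr1 (H.taut ?_) e3
  intro a; simp only [bev]; tauto

theorem disj (H : Good N T G) {l : List (BExpC N)} {c : T.V} {χ : BExpC N} (h : ∀ φ ∈ l, G φ c χ) :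
    G (disjL l) c χ := by
  induction l with
  | nil => exact H.absurdL (H.taut fun _ h => h)
  | cons φ l ih =>
    exact H.a7 (h φ (by simp)) (ih fun ψ hψ => h ψ (by simp [hψ]))

theorem disjR (H : Good N T G) {l : List (BExpC N)} {c : T.V} {ε : BExpC N} (hε : IsMecC ε)
    (hc : ¬ G ε T.one .bot) (h : G ε c (disjL l)) : ∃ φ ∈ l, G ε c φ := by
  induction l with
  | nil => exact absurd (H.a5 h) hc
  | cons φ l ih =>
    rcases H.a8 hε h with h | h
    · exact ⟨φ, by simp, h⟩
    · obtain ⟨ψ, hψ, h⟩ := ih h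
      exact ⟨ψ, by simp [hψ], h⟩

theorem compl (H : Good N T G) (f : Fin N → Bool) (φ : BExpC N) :
    G (mec f) T.one φ ∨ G (mec f) T.one φ.not :=
  H.a8 (isMec_mec f) (H.taut (by intro a; simp only [bev]; tauto))

theorem consis (H : Good N T G) {ε φ : BExpC N} (hc : ¬ G ε T.one .bot) (h1 : G ε T.one φ)
    (h2 : G ε T.one φ.not) : False :=
  hc (H.tr1 (H.andR h1 h2) (H.taut (by intro a; simp only [bev]; tauto)))

theorem tri (H : Good N T G) (f : Fin N → Bool) (φ : BExpC N) :
    G ((mec f).and φ) T.one .bot ∨ (¬ G (mec f) T.one .bot ∧ G (mec f) T.one φ) := by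
  have e0 : G ((mec f).and φ) T.one (mec f) := H.taut (by intro a; simp only [bev]; tauto)
  by_cases hc : G (mec f) T.one .bot
  · exact .inl (H.tr1 e0 hc)
  rcases H.compl f φ with h | h
  · exact .inr ⟨hc, h⟩
  · refine .inl (H.tr1' (H.taut ?_) (H.a2 h))
    intro a; simp only [bev]; tauto

theorem expand (H : Good N T G) (φ : BExpC N) :
    G φ T.one (disjL ((Finset.univ : Finset (Fin N → Bool)).toList.map
      fun f => (mec f).and φ)) := by
  classical
  refine H.taut ?_
  intro a ha
  rw [bev_disjL]
  refine ⟨(mec fun i => decide (a (.var i))).and φ, by simp, ?_⟩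
  simp [bev, bev_mec, ha]

theorem le_of (H : Good N T G) {φ ψ : BExpC N} {c : T.V}
    (h : ∀ f, ¬ G (mec f) T.one .bot → G (mec f) T.one φ → G (mec f) c ψ) : G φ c ψ := by
  refine H.tr1' (H.expand φ) (H.disj ?_)
  simp only [List.mem_map, Finset.mem_toList, Finset.mem_univ, true_and]
  rintro _ ⟨f, rfl⟩
  rcases H.tri f φ with h1 | ⟨h1, h2⟩
  · exact H.absurdL h1
  · exact H.tr1' (H.taut (by intro a; simp only [bev]; tauto)) (h f h1 h2)

theorem ex_of (H : Good N T G) {ε ψ : BExpC N} {c : T.V} (hε : IsMecC ε) (hc : ¬ G ε T.one .bot)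
    (h : G ε c ψ) : ∃ f, ¬ G (mec f) T.one .bot ∧ G (mec f) T.one ψ ∧ G ε c (mec f) := by
  obtain ⟨χ, hχ, h⟩ := H.disjR hε hc (H.tr1 h (H.expand ψ))
  simp only [List.mem_map, Finset.mem_toList, Finset.mem_univ, true_and] at hχ
  obtain ⟨f, rfl⟩ := hχ
  rcases H.tri f ψ with h1 | ⟨h1, h2⟩
  · exact absurd (H.a5 (H.tr1 h h1)) hc
  · exact ⟨f, h1, h2, H.tr1 h (H.taut (by intro a; simp only [bev]; tauto))⟩

theorem mec_eq (H : Good N T G) {f g : Fin N → Bool} (hc : ¬ G (mec f) T.one .bot)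
    (h : G (mec f) T.one (mec g)) : f = g := by
  by_contra hne
  refine hc (H.tr1 (H.andR h (H.taut fun _ h => h)) (H.taut ?_))
  intro a
  simp only [bev, bev_mec]
  rintro ⟨h1, h2⟩
  apply hne
  funext i
  have := (h2 i).symm.trans (h1 i)
  exact Bool.eq_iff_iff.mpr this

theorem le_iff_ge (H : Good N T G) {f g : Fin N → Bool} (hf : ¬ G (mec f) T.one .bot)
    (hg : ¬ G (mec g) T.one .bot) :
    G (mec f) T.one (mec g).dle ↔ G (mec g) T.one (mec f).dge := by
  constructor
  · intro h
    rcases H.tri g (mec f).dge with h1 | h1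
    · exact absurd (H.tr1 (H.andR h (H.a12b _)) (H.a18b h1)) hf
    · exact h1.2
  · intro h
    rcases H.tri f (mec g).dle with h1 | h1
    · exact absurd (H.tr1 (H.andR h (H.a12a _)) (H.a18a h1)) hg
    · exact h1.2

theorem diamond_dle (H : Good N T G) (φ : BExpC N) : IsDiamondConj φ.dle :=
  ⟨[φ.dle], by simp, by simp [IsDiamond], rfl⟩

theorem diamond_dge (H : Good N T G) (φ : BExpC N) : IsDiamondConj φ.dge :=
  ⟨[φ.dge], by simp, by simp [IsDiamond], rfl⟩

theorem between (H : Good N T G) {ε : BExpC N} {f : Fin N → Bool} {c : T.V} (hf : ¬ G (mec f) T.one .bot)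
    (h1 : G ε c (mec f).dle) (h2 : G ε c (mec f).dge) : G ε c (mec f) := by
  refine H.tr1 (H.a19 (H.diamond_dle _) (H.diamond_dge _) ?_ h1 h2) (H.a16 (isMec_mec f))
  intro h
  exact hf (H.tr1 (H.andR (H.a12a _) (H.a12b _)) h)

theorem max_sim (H : Good N T G) (ε : BExpC N) {δ : BExpC N} (hδ : ¬ G δ T.one .bot) :
    ∃ c : T.V, G ε c δ ∧ ∀ d : T.V, G ε d δ → (d : ℝ) ≤ c := by
  have : Finite T.V := T.finite.to_subtype
  obtain ⟨c, hc, hm⟩ := Set.exists_max_image {c : T.V | G ε c δ} (fun c => (c : ℝ))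
    (Set.toFinite _) ⟨T.zero, H.a4 _ hδ⟩
  exact ⟨c, hc, hm⟩

def World (G : BExpC N → T.V → BExpC N → Prop) : Type :=
  {f : Fin N → Bool // ¬ G (mec f) T.one .bot}

theorem finite_world (G : BExpC N → T.V → BExpC N → Prop) : Finite (World G) :=
  Finite.of_injective (fun w : World G => w.1) Subtype.val_injective

theorem model (H : Good N T G) : ∃ (W : Type) (_ : Fintype W) (_ : Nonempty W) (_ : LinearOrder W)
    (sp : TOSimilaritySpace T W) (ev : LAECEval N W),
    ∀ φ c ψ, LAECSat sp ev (.gi φ c ψ) ↔ G φ c ψ := by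
  classical
  let W := World G
  have hfin0 : Finite W := finite_world G
  have hfin : Fintype W := Fintype.ofFinite W
  have hne : Nonempty W := by
    by_contra hn
    refine H.a10 (H.le_of fun f hf _ => absurd ⟨⟨f, hf⟩⟩ hn)
  let lo : LinearOrder W :=
    { le := fun u v => G (mec u.1) T.one (mec v.1).dle
      le_refl := fun u => H.a12a _
      le_trans := fun u v w h1 h2 => H.tr1 h1 (H.tr1 (H.a17a h2) (H.a13a _))
      le_antisymm := fun u v h1 h2 => by
        have h3 := (H.le_iff_ge v.2 u.2).1 h2
        exact Subtype.ext (H.mec_eq u.2 (H.between v.2 h1 h3))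
      le_total := fun u v => by
        rcases H.a15a (mec u.1) (mec v.1) with h | h
        · exact .inl (H.tr1 (H.a12a _) h)
        · exact .inr (H.tr1 (H.a12a _) h)
      toDecidableLE := Classical.decRel _ }
  have hle : ∀ u v : W, u ≤ v ↔ G (mec u.1) T.one (mec v.1).dle := fun _ _ => Iff.rfl
  have hge : ∀ u v : W, u ≤ v ↔ G (mec v.1) T.one (mec u.1).dge := fun u v =>
    H.le_iff_ge u.2 v.2
  have hS : ∀ u v : W, ∃ c : T.V, G (mec u.1) c (mec v.1) ∧
      ∀ d : T.V, G (mec u.1) d (mec v.1) → (d : ℝ) ≤ c := fun u v => H.max_sim _ v.2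
  choose S hS1 hS2 using hS
  have hSc : ∀ (u v : W) (c : T.V), (c : ℝ) ≤ S u v ↔ G (mec u.1) c (mec v.1) := fun u v c =>
    ⟨fun h => H.a3 h (hS1 u v), hS2 u v c⟩
  have symmG : ∀ (u v : W) (c : T.V), G (mec u.1) c (mec v.1) → G (mec v.1) c (mec u.1) :=
    fun u v c h => H.a6 (isMec_mec _) (isMec_mec _) u.2 h
  let sp : TOSimilaritySpace T W :=
    { S := S
      eq_one_iff := fun u v => by
        constructor
        · intro h
          have := hS1 u v
          rw [h] at this
          exact Subtype.ext (H.mec_eq u.2 this)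
        · rintro rfl
          exact Subtype.ext (le_antisymm (H.le_one _) (hS2 u u T.one (H.taut fun _ h => h)))
      symm := fun u v => Subtype.ext (le_antisymm
        ((hSc _ _ _).2 (symmG _ _ _ (hS1 u v))) ((hSc _ _ _).2 (symmG _ _ _ (hS1 v u))))
      triangle := fun u v w => (hSc _ _ _).2 (H.a9 (hS1 u v) (hS1 v w))
      compat := fun u v w h1 h2 => by
        refine le_min ((hSc _ _ _).2 ?_) ((hSc _ _ _).2 ?_)
        · exact H.between v.2 (H.of_one ((hle _ _).1 h1)) (H.tr1 (hS1 u w) ((hge _ _).1 h2))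
        · refine symmG _ _ _ (H.between v.2 ?_ (H.of_one ((hge _ _).1 h2)))
          exact H.tr1 (symmG _ _ _ (hS1 u w)) ((hle _ _).1 h1) }
  have hlift : ∀ {φ ψ : BExpC N},
      (∀ w : W, G (mec w.1) T.one φ → G (mec w.1) T.one ψ) → G φ T.one ψ := fun h =>
    H.le_of fun f hf => h ⟨f, hf⟩
  have hnot : ∀ (w : W) φ, G (mec w.1) T.one φ.not ↔ ¬ G (mec w.1) T.one φ := fun w φ =>
    ⟨fun h1 h2 => H.consis w.2 h2 h1, fun h => (H.compl w.1 φ).resolve_left h⟩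
  have hvar : ∀ (w : W) i, G (mec w.1) T.one (.var i) ↔ w.1 i = true := by
    intro w i
    constructor
    · intro h
      by_contra hf
      refine H.consis w.2 h (H.taut fun a ha => ?_)
      rw [bev_mec] at ha
      simp [bev, ha i, hf]
    · intro h
      refine H.taut fun a ha => ?_
      rw [bev_mec] at ha
      simp [bev, ha i, h]
  let ev : LAECEval N W :=
    { e := fun φ => {w | G (mec w.1) T.one φ}
      map_bot := by
        ext w; simpa using w.2
      map_top := by
        ext w; simpa using H.taut (by simp [bev])
      map_and := fun φ ψ => by
        ext w
        refine ⟨fun h => ⟨H.tr1 h (H.taut ?_), H.tr1 h (H.taut ?_)⟩, fun h => H.andR h.1 h.2⟩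
        · intro a; simp only [bev]; tauto
        · intro a; simp only [bev]; tauto
      map_or := fun φ ψ => by
        ext w
        refine ⟨fun h => H.a8 (isMec_mec _) h, ?_⟩
        rintro (h | h) <;> refine H.tr1 h (H.taut ?_) <;> intro a <;> simp only [bev] <;> tauto
      map_not := fun φ => by
        ext w; exact hnot w φ
      map_dle := fun φ => by
        ext w
        constructor
        · intro h
          by_cases hE : ∃ u : W, G (mec u.1) T.one φ
          · obtain ⟨m, hm, hmax⟩ := Set.exists_max_image {u : W | G (mec u.1) T.one φ} id
              (Set.toFinite _) hE
            have h1 : G φ T.one (mec m.1).dle := hlift fun u hu => (hle u m).1 (hmax u hu)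
            exact ⟨m, hm, (hle _ _).2 (H.tr1 h (H.tr1 (H.a17a h1) (H.a13a _)))⟩
          · have h1 : G φ T.one .bot := hlift fun u hu => absurd ⟨u, hu⟩ hE
            exact absurd (H.tr1 h (H.tr1 (H.a17a h1) H.a14a)) w.2
        · rintro ⟨u, hu, hwu⟩
          exact H.tr1 ((hle _ _).1 hwu) (H.a17a hu)
      map_dge := fun φ => by
        ext w
        constructor
        · intro h
          by_cases hE : ∃ u : W, G (mec u.1) T.one φ
          · obtain ⟨m, hm, hmin⟩ := Set.exists_min_image {u : W | G (mec u.1) T.one φ} id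
              (Set.toFinite _) hE
            have h1 : G φ T.one (mec m.1).dge := hlift fun u hu => (hge m u).1 (hmin u hu)
            exact ⟨m, hm, (hge _ _).2 (H.tr1 h (H.tr1 (H.a17b h1) (H.a13b _)))⟩
          · have h1 : G φ T.one .bot := hlift fun u hu => absurd ⟨u, hu⟩ hE
            exact absurd (H.tr1 h (H.tr1 (H.a17b h1) H.a14b)) w.2
        · rintro ⟨u, hu, hwu⟩
          exact H.tr1 ((hge _ _).1 hwu) (H.a17b hu)
      separating := fun v w hvw => by
        have : ∃ i, v.1 i ≠ w.1 i := by
          by_contra hn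
          push Not at hn
          exact hvw (Subtype.ext (funext hn))
        obtain ⟨i, hi⟩ := this
        refine ⟨i, ?_⟩
        change Xor' (G (mec v.1) T.one (.var i)) (G (mec w.1) T.one (.var i))
        rw [hvar, hvar]
        cases h1 : v.1 i <;> cases h2 : w.1 i <;> simp_all [Xor'] }
  refine ⟨W, hfin, hne, lo, sp, ev, fun φ c ψ => ⟨fun h => ?_, fun h => ?_⟩⟩
  · refine H.le_of fun f hf h1 => ?_
    obtain ⟨u, hu, hc⟩ := h (show (⟨f, hf⟩ : W) ∈ ev.e φ from h1)
    exact H.tr1 ((hSc _ _ _).1 hc) hu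
  · intro w hw
    obtain ⟨f, h1, h2, h3⟩ := H.ex_of (isMec_mec w.1) w.2 (H.tr1' hw h)
    exact ⟨⟨f, h1⟩, h2, (hSc _ _ _).2 h3⟩

end Good

/-! ### Lindenbaum -/

section Lind
variable {N : ℕ} {T : FiniteTNorm}

inductive PC (T : FiniteTNorm) (Th : Set (CFml N T.V)) : CFml N T.V → Prop
  | hyp {Φ} (h : Φ ∈ Th) : PC T Th Φ
  | ax {Φ} (h : ∀ Th' : Set (CFml N T.V), LAECProv T Th' Φ) : PC T Th Φ
  | mp {Φ Ψ} (h₁ : PC T Th Φ) (h₂ : PC T Th (Φ.imp Ψ)) : PC T Th Ψ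

theorem pc_iff {Th : Set (CFml N T.V)} {Φ : CFml N T.V} : PC T Th Φ ↔ LAECProv T Th Φ := by
  constructor
  · intro h
    induction h with
    | hyp h => exact .hyp h
    | ax h => exact h _
    | mp _ _ h1 h2 => exact .mp h1 h2
  · intro h
    induction h with
    | hyp h => exact .hyp h
    | mp _ _ h1 h2 => exact .mp h1 h2
    | a1' h => exact .ax fun _ => .a1' h
    | a2 => exact .ax fun _ => .a2 _ _
    | a3 _ _ h => exact .ax fun _ => .a3 _ _ h
    | a4 => exact .ax fun _ => .a4 _ _
    | a5 => exact .ax fun _ => .a5 _ _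
    | a6 _ h1 h2 => exact .ax fun _ => .a6 _ h1 h2
    | a7 => exact .ax fun _ => .a7 _ _ _ _
    | a8 _ _ _ h => exact .ax fun _ => .a8 _ _ _ h
    | a9 => exact .ax fun _ => .a9 _ _ _ _ _
    | a10 => exact .ax fun _ => .a10
    | a11 h => exact .ax fun _ => .a11 h
    | a12a => exact .ax fun _ => .a12a _
    | a12b => exact .ax fun _ => .a12b _
    | a13a => exact .ax fun _ => .a13a _
    | a13b => exact .ax fun _ => .a13b _
    | a14a => exact .ax fun _ => .a14a
    | a14b => exact .ax fun _ => .a14b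
    | a15a => exact .ax fun _ => .a15a _ _
    | a15b => exact .ax fun _ => .a15b _ _
    | a16 h => exact .ax fun _ => .a16 h
    | a17a => exact .ax fun _ => .a17a _ _ _
    | a17b => exact .ax fun _ => .a17b _ _ _
    | a18a => exact .ax fun _ => .a18a _ _
    | a18b => exact .ax fun _ => .a18b _ _
    | a19 _ _ h1 h2 => exact .ax fun _ => .a19 _ _ h1 h2

theorem taut {Th : Set (CFml N T.V)} {Φ : CFml N T.V}
    (h : ∀ g : BExpC N → T.V → BExpC N → Bool, Φ.peval g = true) : PC T Th Φ :=
  .ax fun _ => .a11 h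

theorem taut1 {Th : Set (CFml N T.V)} {A Φ : CFml N T.V} (hA : PC T Th A)
    (h : ∀ g : BExpC N → T.V → BExpC N → Bool, A.peval g = true → Φ.peval g = true) :
    PC T Th Φ := by
  refine .mp hA (taut fun g => ?_)
  have := h g
  simp only [CFml.imp, CFml.peval]
  cases h1 : A.peval g <;> simp_all

theorem taut2 {Th : Set (CFml N T.V)} {A B Φ : CFml N T.V} (hA : PC T Th A) (hB : PC T Th B)
    (h : ∀ g : BExpC N → T.V → BExpC N → Bool, A.peval g = true → B.peval g = true →
      Φ.peval g = true) :
    PC T Th Φ := by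
  refine .mp hA (taut1 hB fun g hg => ?_)
  have := h g
  simp only [CFml.imp, CFml.peval]
  cases h1 : A.peval g <;> simp_all

theorem ded {Th : Set (CFml N T.V)} {A B : CFml N T.V} (h : PC T (insert A Th) B) :
    PC T Th (A.imp B) := by
  induction h with
  | hyp h =>
    rcases h with rfl | h
    · refine taut fun g => ?_
      simp [CFml.imp, CFml.peval]
    · exact taut1 (.hyp h) fun g hg => by simp [CFml.imp, CFml.peval, hg]
  | ax h => exact taut1 (.ax h) fun g hg => by simp [CFml.imp, CFml.peval, hg]
  | mp _ _ h1 h2 =>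
    refine taut2 h1 h2 fun g => ?_
    simp only [CFml.imp, CFml.peval]
    cases A.peval g <;> simp
    intro h; simp [h]

theorem compact {C : Set (Set (CFml N T.V))} (hC : IsChain (· ⊆ ·) C) (hne : C.Nonempty)
    {B : CFml N T.V} (h : PC T (⋃₀ C) B) : ∃ X ∈ C, PC T X B := by
  have mono : ∀ {X Y : Set (CFml N T.V)} {B}, X ⊆ Y → PC T X B → PC T Y B := by
    intro X Y B hXY h
    induction h with
    | hyp h => exact .hyp (hXY h)
    | ax h => exact .ax h
    | mp _ _ h1 h2 => exact .mp h1 h2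
  induction h with
  | hyp h =>
    obtain ⟨X, hX, h⟩ := h
    exact ⟨X, hX, .hyp h⟩
  | ax h => exact ⟨hne.some, hne.some_mem, .ax h⟩
  | mp _ _ h1 h2 =>
    obtain ⟨X, hX, h1⟩ := h1
    obtain ⟨Y, hY, h2⟩ := h2
    rcases hC.total hX hY with h | h
    · exact ⟨Y, hY, .mp (mono h h1) h2⟩
    · exact ⟨X, hX, .mp h1 (mono h h2)⟩

theorem lindenbaum {Th : Set (CFml N T.V)} {Φ : CFml N T.V} (h : ¬ PC T Th Φ) :
    ∃ M, Th ⊆ M ∧ ¬ PC T M Φ ∧ ∀ A, ¬ PC T M A → PC T M A.not := by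
  obtain ⟨M, hM, hmax⟩ := zorn_subset_nonempty {X | Th ⊆ X ∧ ¬ PC T X Φ} (by
    intro C hC1 hC2 hne
    refine ⟨⋃₀ C, ⟨?_, ?_⟩, fun s hs => Set.subset_sUnion_of_mem hs⟩
    · exact (hC1 hne.some_mem).1.trans (Set.subset_sUnion_of_mem hne.some_mem)
    · intro h
      obtain ⟨X, hX, h⟩ := compact hC2 hne h
      exact (hC1 hX).2 h) Th ⟨subset_rfl, h⟩
  refine ⟨M, hM, hmax.prop.2, fun A hA => ?_⟩
  have key : PC T (insert A M) Φ := by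
    by_contra hn
    have := hmax.le_of_ge (y := insert A M) ⟨hmax.prop.1.trans (Set.subset_insert _ _), hn⟩
      (Set.subset_insert _ _)
    exact hA (.hyp (this (Set.mem_insert _ _)))
  have k1 := ded key
  have key2 : ¬ PC T (insert A.not M) Φ := by
    intro h2
    refine hmax.prop.2 (taut2 k1 (ded h2) fun g => ?_)
    simp only [CFml.imp, CFml.peval]
    cases A.peval g <;> simp
  have := hmax.le_of_ge (y := insert A.not M) ⟨hmax.prop.1.trans (Set.subset_insert _ _), key2⟩
      (Set.subset_insert _ _)
  exact .hyp (this (Set.mem_insert _ _))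

theorem completeness {Th : Set (CFml N T.V)} {Φ : CFml N T.V} (h : LAECEntails T Th Φ) :
    LAECProv T Th Φ := by
  by_contra hn
  rw [← pc_iff] at hn
  obtain ⟨M, hTM, hMΦ, hM⟩ := lindenbaum hn
  have hnot : ∀ A, PC T M A.not ↔ ¬ PC T M A := fun A => by
    refine ⟨fun h1 h2 => hMΦ (taut2 h1 h2 fun g => ?_), hM A⟩
    simp only [CFml.peval]
    cases A.peval g <;> simp
  have hand : ∀ A B, PC T M (A.and B) ↔ PC T M A ∧ PC T M B := fun A B => by
    refine ⟨fun h => ⟨taut1 h fun g => ?_, taut1 h fun g => ?_⟩,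
      fun h => taut2 h.1 h.2 fun g => ?_⟩ <;> simp only [CFml.peval] <;>
      cases A.peval g <;> cases B.peval g <;> simp
  have hor : ∀ A B, PC T M (A.or B) ↔ PC T M A ∨ PC T M B := fun A B => by
    constructor
    · intro h
      by_contra hc
      push Not at hc
      refine hMΦ ?_
      have h1 := taut2 (Φ := A) h (hM B hc.2) fun g => by
        simp only [CFml.peval]
        cases A.peval g <;> cases B.peval g <;> simp
      exact absurd h1 hc.1
    · rintro (h | h) <;> refine taut1 h fun g hg => ?_ <;> simp [CFml.peval, hg]
  have himp : ∀ {A B : CFml N T.V}, LAECProv T M (A.imp B) → PC T M A → PC T M B :=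
    fun h1 h2 => .mp h2 (pc_iff.2 h1)
  have H : Good N T (fun φ c ψ => PC T M (.gi φ c ψ)) :=
    { taut := fun h => pc_iff.2 (prov_taut h)
      a2 := himp (.a2 _ _)
      a3 := fun h => himp (.a3 _ _ h)
      a4 := fun φ ψ h => himp (.a4 _ _) ((hnot _).2 h)
      a5 := himp (.a5 _ _)
      a6 := fun h1 h2 h3 h4 => himp (.a6 _ h1 h2) ((hand _ _).2 ⟨(hnot _).2 h3, h4⟩)
      a7 := fun h1 h2 => himp (.a7 _ _ _ _) ((hand _ _).2 ⟨h1, h2⟩)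
      a8 := fun h1 h2 => (hor _ _).1 (himp (.a8 _ _ _ h1) h2)
      a9 := fun h1 h2 => himp (.a9 _ _ _ _ _) ((hand _ _).2 ⟨h1, h2⟩)
      a10 := (hnot _).1 (pc_iff.2 .a10)
      a12a := fun _ => pc_iff.2 (.a12a _)
      a12b := fun _ => pc_iff.2 (.a12b _)
      a13a := fun _ => pc_iff.2 (.a13a _)
      a13b := fun _ => pc_iff.2 (.a13b _)
      a14a := pc_iff.2 .a14a
      a14b := pc_iff.2 .a14b
      a15a := fun _ _ => (hor _ _).1 (pc_iff.2 (.a15a _ _))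
      a16 := fun h => pc_iff.2 (.a16 h)
      a17a := himp (.a17a _ _ _)
      a17b := himp (.a17b _ _ _)
      a18a := himp (.a18a _ _)
      a18b := himp (.a18b _ _)
      a19 := fun h1 h2 h3 h4 h5 => himp (.a19 _ _ h1 h2)
        ((hand _ _).2 ⟨(hand _ _).2 ⟨(hnot _).2 h3, h4⟩, h5⟩) }
  obtain ⟨W, i1, i2, i3, sp, ev, hsat⟩ := H.model
  have all : ∀ A, LAECSat sp ev A ↔ PC T M A := by
    intro A
    induction A with
    | gi φ c ψ => exact hsat φ c ψ
    | and A B h1 h2 => rw [hand, ← h1, ← h2]; rfl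
    | or A B h1 h2 => rw [hor, ← h1, ← h2]; rfl
    | not A h1 => rw [hnot, ← h1]; rfl
  exact hMΦ ((all Φ).1 (h W sp ev fun Ψ hΨ => (all Ψ).2 (.hyp (hTM hΨ))))

end Lind

/-! ### Soundness -/

section Sound
variable {N : ℕ} {T : FiniteTNorm} {W : Type} [Fintype W] [Nonempty W] [LinearOrder W]
  (sp : TOSimilaritySpace T W) (ev : LAECEval N W)

theorem self_sim (c : T.V) (w : W) : (c : ℝ) ≤ sp.S w w := by
  rw [(sp.eq_one_iff w w).2 rfl]
  exact (T.subset c.2).2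

theorem sat_one (φ ψ : BExpC N) :
    LAECSat sp ev (.gi φ T.one ψ) ↔ ev.e φ ⊆ ev.e ψ := by
  constructor
  · intro h w hw
    obtain ⟨a, ha, h1⟩ := h hw
    have : sp.S w a = T.one := Subtype.ext (le_antisymm (T.subset (sp.S w a).2).2 h1)
    rwa [(sp.eq_one_iff w a).1 this]
  · intro h w hw
    exact ⟨w, h hw, self_sim sp _ w⟩

theorem sat_imp (A B : CFml N T.V) :
    LAECSat sp ev (A.imp B) ↔ (LAECSat sp ev A → LAECSat sp ev B) := by
  simp only [CFml.imp, LAECSat]; tauto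

theorem mem_conj (w : W) (l : List (BExpC N)) :
    w ∈ ev.e (conjListC l) ↔ ∀ φ ∈ l, w ∈ ev.e φ := by
  induction l with
  | nil => simp [conjListC, ev.map_top]
  | cons φ l ih =>
    cases l with
    | nil => simp [conjListC]
    | cons χ r => simp only [conjListC, ev.map_and, Set.mem_inter_iff, ih]; simp

theorem mec_sub {ε : BExpC N} (h : IsMecC ε) {u v : W} (hu : u ∈ ev.e ε) (hv : v ∈ ev.e ε) :
    u = v := by
  obtain ⟨l, f, -, hl, rfl⟩ := h
  by_contra hne
  obtain ⟨i, hi⟩ := ev.separating u v hne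
  rw [mem_conj] at hu hv
  have h1 := hu _ (List.mem_map.2 ⟨i, hl i, rfl⟩)
  have h2 := hv _ (List.mem_map.2 ⟨i, hl i, rfl⟩)
  cases hf : f i <;> simp [BExpC.literal, hf, ev.map_not] at h1 h2 <;> simp_all [Xor']

theorem conv_diamond {ρ : BExpC N} (h : IsDiamondConj ρ) : (ev.e ρ).OrdConnected := by
  obtain ⟨l, -, hl, rfl⟩ := h
  refine ⟨fun u hu v hv w hw => ?_⟩
  rw [mem_conj] at hu hv ⊢
  intro φ hφ
  have h1 := hu φ hφ
  have h2 := hv φ hφ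
  have h3 := hl φ hφ
  cases φ <;> simp only [IsDiamond] at h3
  · rw [ev.map_dle] at h2 ⊢
    obtain ⟨a, ha, h⟩ := h2
    exact ⟨a, ha, hw.2.trans h⟩
  · rw [ev.map_dge] at h1 ⊢
    obtain ⟨a, ha, h⟩ := h1
    exact ⟨a, ha, h.trans hw.1⟩

theorem subst_mem (w : W) (σ : ℕ → BExpC N) (φ : PropForm) :
    w ∈ ev.e (φ.substC σ) ↔ φ.beval (fun n => @decide (w ∈ ev.e (σ n)) (Classical.dec _)) = true := by
  induction φ with
  | var n => simp [PropForm.substC, PropForm.beval]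
  | bot => simp [PropForm.substC, PropForm.beval, ev.map_bot]
  | top => simp [PropForm.substC, PropForm.beval, ev.map_top]
  | and φ ψ h1 h2 => simp [PropForm.substC, PropForm.beval, ev.map_and, h1, h2]
  | or φ ψ h1 h2 => simp [PropForm.substC, PropForm.beval, ev.map_or, h1, h2]
  | not φ h1 => simp [PropForm.substC, PropForm.beval, ev.map_not, h1]

theorem sat_peval (A : CFml N T.V) :
    LAECSat sp ev A ↔ A.peval (fun φ c ψ => @decide (LAECSat sp ev (.gi φ c ψ))
      (Classical.dec _)) = true := by
  induction A with
  | gi φ c ψ => simp [CFml.peval]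
  | and A B h1 h2 => simp only [LAECSat, CFml.peval, h1, h2]; simp
  | or A B h1 h2 => simp only [LAECSat, CFml.peval, h1, h2]; simp
  | not A h1 => simp only [LAECSat, CFml.peval, h1]; simp

theorem sim_left {w p a : W} (h1 : w ≤ p) (h2 : p ≤ a) : (sp.S w a : ℝ) ≤ sp.S w p :=
  (sp.compat w p a h1 h2).trans (min_le_left _ _)

theorem sim_right {w p a : W} (h1 : a ≤ p) (h2 : p ≤ w) : (sp.S w a : ℝ) ≤ sp.S w p := by
  rw [sp.symm w a, sp.symm w p]
  exact (sp.compat a p w h1 h2).trans (min_le_right _ _)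

theorem sound19 {I J : Set W} (hI : I.OrdConnected) (hJ : J.OrdConnected)
    (hne : (I ∩ J).Nonempty) (c : T.V) (w : W) (h1 : w ∈ sp.nbhd c I) (h2 : w ∈ sp.nbhd c J) :
    w ∈ sp.nbhd c (I ∩ J) := by
  obtain ⟨p, hp⟩ := hne
  obtain ⟨a, ha, hca⟩ := h1
  obtain ⟨b, hb, hcb⟩ := h2
  rcases le_total w p with hwp | hwp
  · -- clip everything to the interval between w and p
    have key : ∀ {K : Set W}, K.OrdConnected → p ∈ K → ∀ a ∈ K, (c : ℝ) ≤ sp.S w a →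
        ∃ a' ∈ K, w ≤ a' ∧ a' ≤ p ∧ (c : ℝ) ≤ sp.S w a' := by
      intro K hK hpK a ha hca
      by_cases h1 : a ≤ w
      · exact ⟨w, hK.out ha hpK ⟨h1, hwp⟩, le_rfl, hwp, self_sim sp c w⟩
      · by_cases h2 : a ≤ p
        · exact ⟨a, ha, (not_le.1 h1).le, h2, hca⟩
        · exact ⟨p, hpK, hwp, le_rfl, hca.trans (sim_left sp hwp (not_le.1 h2).le)⟩
    obtain ⟨a', ha', h1, h2, h3⟩ := key hI hp.1 a ha hca
    obtain ⟨b', hb', h4, h5, h6⟩ := key hJ hp.2 b hb hcb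
    rcases le_total a' b' with h | h
    · exact ⟨b', ⟨hI.out ha' hp.1 ⟨h, h5⟩, hb'⟩, h6⟩
    · exact ⟨a', ⟨ha', hJ.out hb' hp.2 ⟨h, h2⟩⟩, h3⟩
  · have key : ∀ {K : Set W}, K.OrdConnected → p ∈ K → ∀ a ∈ K, (c : ℝ) ≤ sp.S w a →
        ∃ a' ∈ K, a' ≤ w ∧ p ≤ a' ∧ (c : ℝ) ≤ sp.S w a' := by
      intro K hK hpK a ha hca
      by_cases h1 : w ≤ a
      · exact ⟨w, hK.out hpK ha ⟨hwp, h1⟩, le_rfl, hwp, self_sim sp c w⟩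
      · by_cases h2 : p ≤ a
        · exact ⟨a, ha, (not_le.1 h1).le, h2, hca⟩
        · exact ⟨p, hpK, hwp, le_rfl, hca.trans (sim_right sp (not_le.1 h2).le hwp)⟩
    obtain ⟨a', ha', h1, h2, h3⟩ := key hI hp.1 a ha hca
    obtain ⟨b', hb', h4, h5, h6⟩ := key hJ hp.2 b hb hcb
    rcases le_total a' b' with h | h
    · exact ⟨a', ⟨ha', hJ.out hp.2 hb' ⟨h2, h⟩⟩, h3⟩
    · exact ⟨b', ⟨hI.out hp.1 ha' ⟨h5, h⟩, hb'⟩, h6⟩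

theorem sat_bot (φ : BExpC N) (c : T.V) :
    LAECSat sp ev (.gi φ c .bot) ↔ ev.e φ = ∅ := by
  constructor
  · intro h
    refine Set.eq_empty_of_forall_notMem fun w hw => ?_
    obtain ⟨a, ha, -⟩ := h hw
    rw [ev.map_bot] at ha
    exact ha
  · intro h w hw
    rw [h] at hw
    exact hw.elim

theorem soundness {Th : Set (CFml N T.V)} {Φ : CFml N T.V} (h : LAECProv T Th Φ)
    (hTh : ∀ Ψ ∈ Th, LAECSat sp ev Ψ) : LAECSat sp ev Φ := by
  induction h with
  | hyp h => exact hTh _ h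
  | mp _ _ h1 h2 => exact (sat_imp sp ev _ _).1 h2 h1
  | a1' h =>
    obtain ⟨φ', ψ', σ, h, rfl, rfl⟩ := h
    rw [sat_one]
    intro w
    rw [subst_mem, subst_mem]
    exact h _
  | a2 φ ψ =>
    rw [sat_imp, sat_one, sat_bot, ev.map_and, ev.map_not]
    intro h
    rw [← Set.sdiff_eq, Set.sdiff_eq_empty]
    exact h
  | a3 φ ψ hcd =>
    rw [sat_imp]
    intro h w hw
    obtain ⟨a, ha, h⟩ := h hw
    exact ⟨a, ha, hcd.trans h⟩
  | a4 φ ψ =>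
    rw [sat_imp]
    intro h w hw
    simp only [LAECSat] at h
    have h' : ¬ ev.e ψ = ∅ := fun h1 => h ((sat_bot sp ev ψ T.one).2 h1)
    obtain ⟨a, ha⟩ := Set.nonempty_iff_ne_empty.2 h'
    exact ⟨a, ha, (T.subset (sp.S w a).2).1⟩
  | a5 φ c => rw [sat_imp, sat_bot, sat_bot]; exact id
  | a6 c hδ hε =>
    rw [sat_imp]
    rintro ⟨h1, h2⟩ w hw
    simp only [LAECSat] at h1
    have h' : ¬ ev.e _ = ∅ := fun h3 => h1 ((sat_bot sp ev _ T.one).2 h3)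
    obtain ⟨a, ha⟩ := Set.nonempty_iff_ne_empty.2 h'
    obtain ⟨b, hb, h⟩ := h2 ha
    obtain rfl := mec_sub ev hε hw hb
    exact ⟨a, ha, by rw [sp.symm]; exact h⟩
  | a7 φ ψ χ c =>
    rw [sat_imp]
    rintro ⟨h1, h2⟩ w hw
    rw [ev.map_or] at hw
    rcases hw with hw | hw
    · exact h1 hw
    · exact h2 hw
  | @a8 ε φ ψ c hε =>
    rw [sat_imp]
    intro h
    by_cases hE : (ev.e ε).Nonempty
    · obtain ⟨w, hw⟩ := hE
      obtain ⟨a, ha, hc⟩ := h hw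
      rw [ev.map_or] at ha
      rcases ha with ha | ha
      · refine .inl fun v hv => ?_
        obtain rfl := mec_sub ev hε hw hv
        exact ⟨a, ha, hc⟩
      · refine .inr fun v hv => ?_
        obtain rfl := mec_sub ev hε hw hv
        exact ⟨a, ha, hc⟩
    · exact .inl fun v hv => absurd ⟨v, hv⟩ hE
  | a9 φ ψ χ c d =>
    rw [sat_imp]
    rintro ⟨h1, h2⟩ w hw
    obtain ⟨a, ha, hc⟩ := h1 hw
    obtain ⟨b, hb, hd⟩ := h2 ha
    exact ⟨b, hb, (T.op_mono _ _ _ _ hc hd).trans (sp.triangle w a b)⟩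
  | a10 =>
    intro h
    rw [sat_bot, ev.map_top] at h
    exact Set.univ_nonempty.ne_empty h
  | a11 h => rw [sat_peval]; exact h _
  | a12a φ =>
    rw [sat_one, ev.map_dle]
    exact fun w hw => ⟨w, hw, le_rfl⟩
  | a12b φ =>
    rw [sat_one, ev.map_dge]
    exact fun w hw => ⟨w, hw, le_rfl⟩
  | a13a φ =>
    simp only [sat_one, ev.map_dle]
    rintro w ⟨v, ⟨u, hu, h1⟩, h2⟩
    exact ⟨u, hu, h2.trans h1⟩
  | a13b φ =>
    simp only [sat_one, ev.map_dge]
    rintro w ⟨v, ⟨u, hu, h1⟩, h2⟩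
    exact ⟨u, hu, h1.trans h2⟩
  | a14a =>
    simp only [sat_one, ev.map_dle, ev.map_bot]
    rintro w ⟨v, hv, -⟩
    exact hv
  | a14b =>
    simp only [sat_one, ev.map_dge, ev.map_bot]
    rintro w ⟨v, hv, -⟩
    exact hv
  | a15a φ ψ =>
    change LAECSat sp ev _ ∨ LAECSat sp ev _
    simp only [sat_one, ev.map_dle]
    by_contra hn
    simp only [not_or, Set.not_subset] at hn
    obtain ⟨⟨u, ⟨u', hu', h1⟩, h2⟩, v, ⟨v', hv', h3⟩, h4⟩ := hn
    rcases le_total u v with h | h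
    · exact h2 ⟨v', hv', h.trans h3⟩
    · exact h4 ⟨u', hu', h.trans h1⟩
  | a15b φ ψ =>
    change LAECSat sp ev _ ∨ LAECSat sp ev _
    simp only [sat_one, ev.map_dge]
    by_contra hn
    simp only [not_or, Set.not_subset] at hn
    obtain ⟨⟨u, ⟨u', hu', h1⟩, h2⟩, v, ⟨v', hv', h3⟩, h4⟩ := hn
    rcases le_total u v with h | h
    · exact h4 ⟨u', hu', h1.trans h⟩
    · exact h2 ⟨v', hv', h3.trans h⟩
  | a16 hε =>
    rw [sat_one, ev.map_and, ev.map_dle, ev.map_dge]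
    rintro w ⟨⟨u, hu, h1⟩, ⟨v, hv, h2⟩⟩
    obtain rfl := mec_sub ev hε hu hv
    rwa [le_antisymm h1 h2]
  | a17a φ ψ c =>
    rw [sat_imp]
    intro h v hv
    rw [ev.map_dle] at hv
    obtain ⟨w, hw, hvw⟩ := hv
    obtain ⟨a, ha, hc⟩ := h hw
    rcases le_total v a with h1 | h1
    · exact ⟨v, by rw [ev.map_dle]; exact ⟨a, ha, h1⟩, self_sim sp c v⟩
    · refine ⟨a, by rw [ev.map_dle]; exact ⟨a, ha, le_rfl⟩, hc.trans ?_⟩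
      rw [sp.symm w a, sp.symm v a]
      exact sim_left sp h1 hvw
  | a17b φ ψ c =>
    rw [sat_imp]
    intro h v hv
    rw [ev.map_dge] at hv
    obtain ⟨w, hw, hvw⟩ := hv
    obtain ⟨a, ha, hc⟩ := h hw
    rcases le_total a v with h1 | h1
    · exact ⟨v, by rw [ev.map_dge]; exact ⟨a, ha, h1⟩, self_sim sp c v⟩
    · refine ⟨a, by rw [ev.map_dge]; exact ⟨a, ha, le_rfl⟩, hc.trans ?_⟩
      rw [sp.symm w a, sp.symm v a]
      exact sim_right sp hvw h1
  | a18a φ ψ =>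
    rw [sat_imp, sat_bot, sat_bot, ev.map_and, ev.map_and, ev.map_dle, ev.map_dge]
    intro h
    refine Set.eq_empty_of_forall_notMem ?_
    rintro w ⟨⟨u, hu, h1⟩, ⟨v, hv, h2⟩⟩
    exact (Set.eq_empty_iff_forall_notMem.1 h u) ⟨hu, v, hv, h1.trans h2⟩
  | a18b φ ψ =>
    rw [sat_imp, sat_bot, sat_bot, ev.map_and, ev.map_and, ev.map_dle, ev.map_dge]
    intro h
    refine Set.eq_empty_of_forall_notMem ?_
    rintro w ⟨⟨u, hu, h1⟩, ⟨v, hv, h2⟩⟩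
    exact (Set.eq_empty_iff_forall_notMem.1 h u) ⟨hu, v, hv, h2.trans h1⟩
  | a19 φ c hρ hσ =>
    rw [sat_imp]
    rintro ⟨⟨h1, h2⟩, h3⟩ w hw
    have h' : ¬ ev.e _ = ∅ := fun h4 => h1 ((sat_bot sp ev _ T.one).2 h4)
    have h5 := Set.nonempty_iff_ne_empty.2 h'
    rw [ev.map_and] at h5 ⊢
    exact sound19 sp (conv_diamond ev hρ) (conv_diamond ev hσ) h5 c w (h2 hw) (h3 hw)

end Sound

end LAECProof

/-- Soundness and completeness of the Logic of Approximate Entailment on a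
Chain: `T ⊢_LAEC Φ` iff `T ⊨_LAEC Φ`. -/
theorem LAEC_soundness_and_completeness {N : ℕ} (hN : 0 < N) (T : FiniteTNorm)
    (Th : Set (CFml N T.V)) (Φ : CFml N T.V) :
    LAECProv T Th Φ ↔ LAECEntails T Th Φ := by
  exact ⟨fun h W _ _ _ sp ev hTh => LAECProof.soundness sp ev h hTh,
    LAECProof.completeness⟩
end

section
/- Neighbourhoods commute with intersections of orthotopes: let (W, S, (≤_i)_{i=1,…,M}) be a component-wise ordered similarity space, let A and B be orthotopes in W with non-empty intersection, and let c ∈ V. Then U_c(A ∩ B) = U_c(A) ∩ U_c(B). -/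
/-- The similarity on the product `W = ∏ i, W i` of totally ordered similarity spaces:
`S(v,w) = min_i S_i(v_i, w_i)`. -/
noncomputable def prodS {T : FiniteTNorm} {M : ℕ} {W : Fin M → Type}
    [∀ i, Fintype (W i)] [∀ i, Nonempty (W i)] [∀ i, LinearOrder (W i)]
    (hM : 0 < M) (sps : ∀ i, TOSimilaritySpace T (W i))
    (v w : ∀ i, W i) : T.V :=
  haveI : Nonempty (Fin M) := ⟨⟨0, hM⟩⟩
  Finset.univ.inf' Finset.univ_nonempty fun i => (sps i).S (v i) (w i)

/-- The `c`-neighbourhood in a component-wise ordered similarity space. -/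
def pNbhd {T : FiniteTNorm} {M : ℕ} {W : Fin M → Type}
    [∀ i, Fintype (W i)] [∀ i, Nonempty (W i)] [∀ i, LinearOrder (W i)]
    (hM : 0 < M) (sps : ∀ i, TOSimilaritySpace T (W i))
    (c : T.V) (A : Set (∀ i, W i)) : Set (∀ i, W i) :=
  {w | ∃ a ∈ A, (c : ℝ) ≤ (prodS hM sps w a : ℝ)}

/-- `◇≤A` in a component-wise ordered similarity space. -/
def pDcl {M : ℕ} {W : Fin M → Type} [∀ i, LinearOrder (W i)]
    (A : Set (∀ i, W i)) : Set (∀ i, W i) :=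
  {w | ∀ i, ∃ v ∈ A, w i ≤ v i}

/-- `◇≥A` in a component-wise ordered similarity space. -/
def pUcl {M : ℕ} {W : Fin M → Type} [∀ i, LinearOrder (W i)]
    (A : Set (∀ i, W i)) : Set (∀ i, W i) :=
  {w | ∀ i, ∃ v ∈ A, v i ≤ w i}

/-- The cylindrical extension `πC` of a subset `C` of the `i`-th component. -/
def cyl {M : ℕ} {W : Fin M → Type} (i : Fin M) (C : Set (W i)) : Set (∀ j, W j) :=
  {w | w i ∈ C}

/-- The cylindrical extension `πA` of a subset `A` of the partial product over the
block of coordinates `I`. -/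
def cylOn {M : ℕ} {W : Fin M → Type} (I : Finset (Fin M))
    (A : Set (∀ i : {x // x ∈ I}, W i.1)) : Set (∀ i, W i) :=
  {w | (fun i : {x // x ∈ I} => w i.1) ∈ A}

/-- An orthotope in the product `∏ i, W i`: a Cartesian product of intervals `[uᵢ, vᵢ]`. -/
def IsOrthotope {M : ℕ} {W : Fin M → Type} [∀ i, LinearOrder (W i)]
    (A : Set (∀ i, W i)) : Prop :=
  ∃ u v : ∀ i, W i, (∀ i, u i ≤ v i) ∧ A = {w | ∀ i, u i ≤ w i ∧ w i ≤ v i}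

theorem aux_left {T : FiniteTNorm} {W : Type} [Fintype W] [Nonempty W] [LinearOrder W]
    (sp : TOSimilaritySpace T W) (c : T.V) (w x a : W) (h1 : w ≤ x) (h2 : x ≤ a)
    (h : (c : ℝ) ≤ (sp.S w a : ℝ)) : (c : ℝ) ≤ (sp.S w x : ℝ) :=
  h.trans ((sp.compat w x a h1 h2).trans (min_le_left _ _))

theorem aux_right {T : FiniteTNorm} {W : Type} [Fintype W] [Nonempty W] [LinearOrder W]
    (sp : TOSimilaritySpace T W) (c : T.V) (w x a : W) (h1 : a ≤ x) (h2 : x ≤ w)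
    (h : (c : ℝ) ≤ (sp.S w a : ℝ)) : (c : ℝ) ≤ (sp.S w x : ℝ) := by
  rw [sp.symm] at h ⊢
  exact h.trans ((sp.compat a x w h1 h2).trans (min_le_right _ _))

theorem aux_dim {T : FiniteTNorm} {W : Type} [Fintype W] [Nonempty W] [LinearOrder W]
    (sp : TOSimilaritySpace T W) (c : T.V) (u v u' v' p w a b : W)
    (hp : u ≤ p ∧ p ≤ v) (hp' : u' ≤ p ∧ p ≤ v')
    (ha : u ≤ a ∧ a ≤ v) (hb : u' ≤ b ∧ b ≤ v')
    (hca : (c : ℝ) ≤ (sp.S w a : ℝ)) (hcb : (c : ℝ) ≤ (sp.S w b : ℝ)) :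
    ∃ x, (u ≤ x ∧ x ≤ v) ∧ (u' ≤ x ∧ x ≤ v') ∧ (c : ℝ) ≤ (sp.S w x : ℝ) := by
  have hl : max u u' ≤ p := max_le hp.1 hp'.1
  have hr : p ≤ min v v' := le_min hp.2 hp'.2
  have hlr := hl.trans hr
  rcases le_total w (max u u') with h | h
  · refine ⟨max u u', ⟨le_max_left _ _, hl.trans hp.2⟩, ⟨le_max_right _ _, hl.trans hp'.2⟩, ?_⟩
    rcases max_choice u u' with e | e
    · exact aux_left sp c w _ a h (e.trans_le ha.1) hca
    · exact aux_left sp c w _ b h (e.trans_le hb.1) hcb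
  rcases le_total (min v v') w with h' | h'
  · refine ⟨min v v', ⟨hp.1.trans hr, min_le_left _ _⟩, ⟨hp'.1.trans hr, min_le_right _ _⟩, ?_⟩
    rcases min_choice v v' with e | e
    · exact aux_right sp c w _ a (ha.2.trans_eq e.symm) h' hca
    · exact aux_right sp c w _ b (hb.2.trans_eq e.symm) h' hcb
  · refine ⟨w, ⟨(le_max_left _ _).trans h, h'.trans (min_le_left _ _)⟩,
      ⟨(le_max_right _ _).trans h, h'.trans (min_le_right _ _)⟩, ?_⟩
    rw [(sp.eq_one_iff w w).2 rfl]
    exact (T.subset c.2).2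

theorem le_prodS_iff {T : FiniteTNorm} {M : ℕ} {W : Fin M → Type}
    [∀ i, Fintype (W i)] [∀ i, Nonempty (W i)] [∀ i, LinearOrder (W i)]
    (hM : 0 < M) (sps : ∀ i, TOSimilaritySpace T (W i)) (c : T.V) (v w : ∀ i, W i) :
    (c : ℝ) ≤ (prodS hM sps v w : ℝ) ↔ ∀ i, (c : ℝ) ≤ ((sps i).S (v i) (w i) : ℝ) := by
  rw [Subtype.coe_le_coe]
  unfold prodS
  rw [Finset.le_inf'_iff]
  simp

/-- Neighbourhoods commute with intersections of orthotopes: for orthotopes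
`A`, `B` with non-empty intersection, `U_c(A ∩ B) = U_c(A) ∩ U_c(B)`. -/
theorem pNbhd_inter_orthotopes {T : FiniteTNorm} {M : ℕ} {W : Fin M → Type}
    [∀ i, Fintype (W i)] [∀ i, Nonempty (W i)] [∀ i, LinearOrder (W i)]
    (hM : 0 < M) (sps : ∀ i, TOSimilaritySpace T (W i))
    (A B : Set (∀ i, W i)) (hA : IsOrthotope A) (hB : IsOrthotope B)
    (hAB : (A ∩ B).Nonempty) (c : T.V) :
    pNbhd hM sps c (A ∩ B) = pNbhd hM sps c A ∩ pNbhd hM sps c B := by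
  obtain ⟨u, v, -, rfl⟩ := hA
  obtain ⟨u', v', -, rfl⟩ := hB
  obtain ⟨p, hp, hp'⟩ := hAB
  ext w
  constructor
  · rintro ⟨a, ⟨h1, h2⟩, h⟩
    exact ⟨⟨a, h1, h⟩, ⟨a, h2, h⟩⟩
  · rintro ⟨⟨a, ha, hca⟩, ⟨b, hb, hcb⟩⟩
    rw [le_prodS_iff] at hca hcb
    choose x h1 h2 h3 using fun i => aux_dim (sps i) c (u i) (v i) (u' i) (v' i) (p i) (w i)
      (a i) (b i) (hp i) (hp' i) (ha i) (hb i) (hca i) (hcb i)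
    exact ⟨x, ⟨h1, h2⟩, (le_prodS_iff hM sps c w x).2 h3⟩
end
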